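/- There exist a real number α > 0 and a natural number k₀ such that for every a ∈ ℝ² lying on the boundary of the first quadrant or the boundary of the third quadrant (i.e., a ∈ ℝ² with a₁ ≥ 0, a₂ ≥ 0 and a₁·a₂ = 0, or a₁ ≤ 0, a₂ ≤ 0 and a₁·a₂ = 0), and every integer k ≥ k₀, N_k(Σ₁, a) ≤ α·k², where Σ₁ = {A₁, A₂}. -/

import Mathlib

open Matrix Set

noncomputable section

/-- `XSeq S a k` is the set of all vectors `T_{k-1} ⋯ T_0 · a` with each `T_j ∈ S`
(and `XSeq S a 0 = {a}`). -/
def XSeq {n : ℕ} (S : Set (Matrix (Fin n) (Fin n) ℝ)) (a : Fin n → ℝ) : ℕ → Set (Fin n → ℝ)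
  | 0 => {a}
  | k + 1 => ⋃ A ∈ S, A.mulVec '' XSeq S a k

/-- `PHull S a k` is the convex hull of `XSeq S a k`. -/
def PHull {n : ℕ} (S : Set (Matrix (Fin n) (Fin n) ℝ)) (a : Fin n → ℝ) (k : ℕ) :
    Set (Fin n → ℝ) :=
  convexHull ℝ (XSeq S a k)

/-- `EPts S a k` is the set of extreme points of `PHull S a k`. -/
def EPts {n : ℕ} (S : Set (Matrix (Fin n) (Fin n) ℝ)) (a : Fin n → ℝ) (k : ℕ) :
    Set (Fin n → ℝ) :=
  Set.extremePoints ℝ (PHull S a k)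

/-- `NExt S a k` is the number of extreme points of `PHull S a k`. -/
def NExt {n : ℕ} (S : Set (Matrix (Fin n) (Fin n) ℝ)) (a : Fin n → ℝ) (k : ℕ) : ℕ :=
  (EPts S a k).ncard

def M1 : Matrix (Fin 2) (Fin 2) ℝ := !![0, 1; 1, 0]
def M2 : Matrix (Fin 2) (Fin 2) ℝ := !![1, 1; 0, 1]
def M3 : Matrix (Fin 2) (Fin 2) ℝ := !![1, 0; 1, 1]
def M4 : Matrix (Fin 2) (Fin 2) ℝ := !![1, 1; 1, 0]
def M5 : Matrix (Fin 2) (Fin 2) ℝ := !![0, 1; 1, 1]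

/-!
The orbit `X_k` is finite, so each extreme point of its hull is the unique maximiser over `X_k` of
some linear functional, and the points exposed by functionals from the four quadrants can be counted
separately. By negation, assume `0 ≤ a`. The maximisers over `X_{k+1}` of the functionals in a cone
are images of maximisers over `X_k` of the cone pulled back along the swap `M1` or the shear `M2`.

* First quadrant: below the diagonal `M2 *ᵥ y` beats `M1 *ᵥ y`, so only the pullback along `M2`
  matters there. It and the two pullbacks of the upper half subdivide the quadrant along the rays
  through `(1, 1)` and `(1, 2)`. Adjacent cones share at most one exposed point, so the count grows
  by at most two in each step and is linear in `k`.
* Fourth quadrant: only images under `M2` matter, and `M2` pulls the quadrant back to its union with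
  the lower half of the first one. The count thus grows by a linear amount in each step and is
  quadratic in `k`.
* Second quadrant: only images under `M1` matter, and `M1` pulls it back to the fourth quadrant.
* Third quadrant: each point of `X_k` lies above one of three points in the coordinatewise order.
-/

section Wedge

variable {ι κ : Type*}

/-- The convex cone of nonnegative combinations of `p` and `q`, used as a set of functionals
`c ⬝ᵥ ·`. -/
def wedge (p q : ι → ℝ) : Set (ι → ℝ) :=
  PointedCone.hull ℝ {p, q}

lemma mem_wedge {p q c : ι → ℝ} :
    c ∈ wedge p q ↔ ∃ s t : ℝ, 0 ≤ s ∧ 0 ≤ t ∧ s • p + t • q = c := by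
  refine Submodule.mem_span_pair.trans ⟨?_, ?_⟩
  · rintro ⟨⟨s, hs⟩, ⟨t, ht⟩, h⟩
    exact ⟨s, t, hs, ht, h⟩
  · rintro ⟨s, t, hs, ht, h⟩
    exact ⟨⟨s, hs⟩, ⟨t, ht⟩, h⟩

lemma wedge_comm (p q : ι → ℝ) : wedge p q = wedge q p := by
  rw [wedge, wedge, pair_comm]

lemma wedge_eq_union_of_add_eq {p q r : ι → ℝ} (hr : p + q = r) :
    wedge p q = wedge p r ∪ wedge r q := by
  subst hr
  ext c
  simp only [mem_union, mem_wedge]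
  constructor
  · rintro ⟨s, t, hs, ht, rfl⟩
    rcases le_total t s with h | h
    · exact Or.inl ⟨s - t, t, sub_nonneg.2 h, ht, by module⟩
    · exact Or.inr ⟨s, t - s, hs, sub_nonneg.2 h, by module⟩
  · rintro (⟨s, t, hs, ht, rfl⟩ | ⟨s, t, hs, ht, rfl⟩)
    · exact ⟨s + t, t, add_nonneg hs ht, ht, by module⟩
    · exact ⟨s, s + t, hs, add_nonneg hs ht, by module⟩

lemma vecMul_mem_wedge [Fintype ι] (A : Matrix ι κ ℝ) {p q c : ι → ℝ} (hc : c ∈ wedge p q) :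
    c ᵥ* A ∈ wedge (p ᵥ* A) (q ᵥ* A) := by
  obtain ⟨s, t, hs, ht, rfl⟩ := mem_wedge.1 hc
  exact mem_wedge.2 ⟨s, t, hs, ht, by simp only [add_vecMul, smul_vecMul]⟩

end Wedge

section Exposed

variable {ι κ : Type*} [Fintype ι] [Fintype κ]

/-- The points of `X` that are the unique maximiser over `X` of a linear functional `x ↦ c ⬝ᵥ x`
with `c ∈ C`. Extreme points are counted by splitting the set of exposing functionals into
cones. -/
def exposedBy (X C : Set (ι → ℝ)) : Set (ι → ℝ) :=
  {x ∈ X | ∃ c ∈ C, ∀ y ∈ X, c ⬝ᵥ x ≤ c ⬝ᵥ y → y = x}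

lemma exposedBy_subset (X C : Set (ι → ℝ)) : exposedBy X C ⊆ X := fun _ hx => hx.1

lemma exposedBy_mono (X : Set (ι → ℝ)) {C D : Set (ι → ℝ)} (h : C ⊆ D) :
    exposedBy X C ⊆ exposedBy X D :=
  fun _ ⟨hx, c, hc, hmax⟩ => ⟨hx, c, h hc, hmax⟩

lemma exposedBy_union (X C D : Set (ι → ℝ)) :
    exposedBy X (C ∪ D) = exposedBy X C ∪ exposedBy X D := by
  apply Subset.antisymm
  · rintro x ⟨hx, c, hc | hc, hmax⟩
    exacts [Or.inl ⟨hx, c, hc, hmax⟩, Or.inr ⟨hx, c, hc, hmax⟩]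
  · exact union_subset (exposedBy_mono X subset_union_left) (exposedBy_mono X subset_union_right)

lemma exposedBy_singleton_subsingleton (X : Set (ι → ℝ)) (c : ι → ℝ) :
    (exposedBy X {c}).Subsingleton := by
  rintro x ⟨hx, _, rfl, hxmax⟩ y ⟨hy, d, rfl, hymax⟩
  rcases le_total (d ⬝ᵥ x) (d ⬝ᵥ y) with h | h
  exacts [(hxmax y hy h).symm, hymax x hx h]

lemma extremePoints_convexHull_subset_exposedBy_univ {X : Set (ι → ℝ)} (hX : X.Finite) :
    extremePoints ℝ (convexHull ℝ X) ⊆ exposedBy X univ := by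
  classical
  intro x hx
  have hx_notMem : x ∉ convexHull ℝ (X \ {x}) := fun h =>
    ((convex_convexHull ℝ X).mem_extremePoints_iff_mem_sdiff_convexHull_sdiff.1 hx).2
      (convexHull_mono (sdiff_subset_sdiff_left (subset_convexHull ℝ X)) h)
  have hclosed : IsClosed (convexHull ℝ (X \ {x})) := hX.sdiff.isClosed_convexHull ℝ
  obtain ⟨f, s, hfs, hsx⟩ :=
    geometric_hahn_banach_closed_point (convex_convexHull ℝ _) hclosed hx_notMem
  obtain ⟨c, hc⟩ := (dotProductEquiv ℝ ι).surjective f.toLinearMap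
  have hf (y : ι → ℝ) : c ⬝ᵥ y = f y := LinearMap.congr_fun hc y
  refine ⟨extremePoints_convexHull_subset hx, c, mem_univ c, fun y hy hle => ?_⟩
  by_contra hne
  have hlt : f y < f x := (hfs y (subset_convexHull ℝ _ ⟨hy, hne⟩)).trans hsx
  rw [hf, hf] at hle
  exact hlt.not_ge hle

lemma eq_of_mem_exposedBy_wedge {X : Set (ι → ℝ)} {p q x y : ι → ℝ}
    (hx : x ∈ exposedBy X (wedge p q)) (hy : y ∈ X) (hp : p ⬝ᵥ x ≤ p ⬝ᵥ y)
    (hq : q ⬝ᵥ x ≤ q ⬝ᵥ y) : y = x := by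
  obtain ⟨-, c, hc, hmax⟩ := hx
  obtain ⟨s, t, hs, ht, rfl⟩ := mem_wedge.1 hc
  apply hmax y hy
  simp only [add_dotProduct, smul_dotProduct, smul_eq_mul]
  gcongr

/-- A point at least as good as `x` for `r = p + q` is also at least as good for `p` or for `q`,
hence for all functionals of one of the two cones. -/
lemma exposedBy_wedge_inter_subset (X : Set (ι → ℝ)) {p q r : ι → ℝ} (hr : p + q = r) :
    exposedBy X (wedge p r) ∩ exposedBy X (wedge r q) ⊆ exposedBy X {r} := by
  rintro x ⟨hxp, hxq⟩
  refine ⟨hxp.1, r, rfl, fun y hy hle => ?_⟩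
  have hsum : p ⬝ᵥ x + q ⬝ᵥ x ≤ p ⬝ᵥ y + q ⬝ᵥ y := by
    rwa [← add_dotProduct, ← add_dotProduct, hr]
  rcases le_or_gt (p ⬝ᵥ x) (p ⬝ᵥ y) with hp | hp
  · exact eq_of_mem_exposedBy_wedge hxp hy hp hle
  · exact eq_of_mem_exposedBy_wedge hxq hy hle (by linarith)

lemma ncard_exposedBy_wedge_le_add (X : Set (ι → ℝ)) {p q r : ι → ℝ} (hr : p + q = r) :
    (exposedBy X (wedge p q)).ncard ≤
      (exposedBy X (wedge p r)).ncard + (exposedBy X (wedge r q)).ncard := by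
  rw [wedge_eq_union_of_add_eq hr, exposedBy_union]
  exact ncard_union_le _ _

lemma ncard_exposedBy_wedge_add_le {X : Set (ι → ℝ)} (hX : X.Finite) {p q r : ι → ℝ}
    (hr : p + q = r) :
    (exposedBy X (wedge p r)).ncard + (exposedBy X (wedge r q)).ncard ≤
      (exposedBy X (wedge p q)).ncard + 1 := by
  have hfin (C : Set (ι → ℝ)) : (exposedBy X C).Finite := hX.subset (exposedBy_subset X C)
  rw [wedge_eq_union_of_add_eq hr, exposedBy_union,
    ← ncard_union_add_ncard_inter _ _ (hfin _) (hfin _)]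
  gcongr
  have hsub := (exposedBy_singleton_subsingleton X r).anti (exposedBy_wedge_inter_subset X hr)
  exact (ncard_le_one ((hfin _).inter_of_left _)).2 fun _ hx _ hy => hsub hx hy

lemma ncard_exposedBy_wedge_inter_image_le {A : Matrix κ ι ℝ} {X : Set (ι → ℝ)}
    {Y : Set (κ → ℝ)} (hX : X.Finite) (hA : A.mulVec.Injective) (hXY : MapsTo A.mulVec X Y)
    (p q : κ → ℝ) :
    (exposedBy Y (wedge p q) ∩ A.mulVec '' X).ncard ≤
      (exposedBy X (wedge (p ᵥ* A) (q ᵥ* A))).ncard := by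
  have hfin := hX.subset (exposedBy_subset X (wedge (p ᵥ* A) (q ᵥ* A)))
  refine (ncard_le_ncard ?_ (hfin.image A.mulVec)).trans (ncard_image_le hfin)
  rintro _ ⟨⟨-, c, hc, hmax⟩, x, hx, rfl⟩
  refine ⟨x, ⟨hx, c ᵥ* A, vecMul_mem_wedge A hc, fun y hy hle => ?_⟩, rfl⟩
  exact hA (hmax _ (hXY hy) (by rwa [dotProduct_mulVec, dotProduct_mulVec]))

end Exposed

section XSeq

variable {n : ℕ} {S : Set (Matrix (Fin n) (Fin n) ℝ)} {a : Fin n → ℝ} {k : ℕ}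

lemma mulVec_mem_XSeq_succ {A : Matrix (Fin n) (Fin n) ℝ} {x : Fin n → ℝ} (hA : A ∈ S)
    (hx : x ∈ XSeq S a k) : A *ᵥ x ∈ XSeq S a (k + 1) :=
  mem_biUnion hA (mem_image_of_mem _ hx)

lemma XSeq_pair_succ (A B : Matrix (Fin n) (Fin n) ℝ) (a : Fin n → ℝ) (k : ℕ) :
    XSeq {A, B} a (k + 1) = A.mulVec '' XSeq {A, B} a k ∪ B.mulVec '' XSeq {A, B} a k := by
  simp only [XSeq, biUnion_insert, biUnion_singleton]

lemma mem_XSeq_pair_succ {A B : Matrix (Fin n) (Fin n) ℝ} {x : Fin n → ℝ} :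
    x ∈ XSeq {A, B} a (k + 1) ↔ ∃ y ∈ XSeq {A, B} a k, x = A *ᵥ y ∨ x = B *ᵥ y := by
  rw [XSeq_pair_succ]
  constructor
  · rintro (⟨y, hy, rfl⟩ | ⟨y, hy, rfl⟩)
    exacts [⟨y, hy, Or.inl rfl⟩, ⟨y, hy, Or.inr rfl⟩]
  · rintro ⟨y, hy, rfl | rfl⟩
    exacts [Or.inl ⟨y, hy, rfl⟩, Or.inr ⟨y, hy, rfl⟩]

lemma finite_XSeq (hS : S.Finite) (a : Fin n → ℝ) (k : ℕ) : (XSeq S a k).Finite := by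
  induction k with
  | zero => exact finite_singleton a
  | succ k ih => exact hS.biUnion fun A _ => ih.image A.mulVec

lemma pow_mulVec_mem_XSeq {A : Matrix (Fin n) (Fin n) ℝ} (hA : A ∈ S) (a : Fin n → ℝ) (k : ℕ) :
    (A ^ k) *ᵥ a ∈ XSeq S a k := by
  induction k with
  | zero => rw [pow_zero, one_mulVec]; rfl
  | succ k ih => rw [pow_succ', ← mulVec_mulVec]; exact mulVec_mem_XSeq_succ hA ih

lemma monotone_mulVec {ι κ : Type*} [Fintype κ] {A : Matrix ι κ ℝ} (hA : ∀ i j, 0 ≤ A i j) :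
    Monotone A.mulVec :=
  fun _ _ h i => dotProduct_le_dotProduct_of_nonneg_left h (hA i)

lemma nonneg_of_mem_XSeq (hS : ∀ A ∈ S, ∀ i j, 0 ≤ A i j) (ha : 0 ≤ a) :
    ∀ {k : ℕ} {x : Fin n → ℝ}, x ∈ XSeq S a k → 0 ≤ x := by
  intro k
  induction k with
  | zero => rintro x rfl; exact ha
  | succ k ih =>
    intro x hx
    obtain ⟨A, hA, y, hy, rfl⟩ := mem_iUnion₂.1 hx
    exact fun i => dotProduct_nonneg_of_nonneg (hS A hA i) (ih hy)

lemma XSeq_neg (S : Set (Matrix (Fin n) (Fin n) ℝ)) (a : Fin n → ℝ) (k : ℕ) :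
    XSeq S (-a) k = -XSeq S a k := by
  induction k with
  | zero => exact (neg_singleton a).symm
  | succ k ih =>
    simp only [XSeq, ih, ← image_neg_eq_neg, image_iUnion₂, image_image, mulVec_neg]

lemma NExt_neg (S : Set (Matrix (Fin n) (Fin n) ℝ)) (a : Fin n → ℝ) (k : ℕ) :
    NExt S (-a) k = NExt S a k := by
  have h : EPts S (-a) k = -EPts S a k := by
    rw [EPts, PHull, XSeq_neg, convexHull_neg, ← image_neg_eq_neg, ← image_neg_eq_neg]
    exact (image_extremePoints (LinearEquiv.neg ℝ) (PHull S a k)).symm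
  rw [NExt, h, ← image_neg_eq_neg, ncard_image_of_injective _ neg_injective, NExt]

lemma NExt_le_ncard_exposedBy_univ (hS : S.Finite) (a : Fin n → ℝ) (k : ℕ) :
    NExt S a k ≤ (exposedBy (XSeq S a k) univ).ncard :=
  have hfin := finite_XSeq hS a k
  ncard_le_ncard (extremePoints_convexHull_subset_exposedBy_univ hfin)
    (hfin.subset (exposedBy_subset _ _))

lemma ncard_exposedBy_XSeq_zero_le (S : Set (Matrix (Fin n) (Fin n) ℝ)) (a : Fin n → ℝ)
    (C : Set (Fin n → ℝ)) : (exposedBy (XSeq S a 0) C).ncard ≤ 1 :=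
  (ncard_le_ncard (exposedBy_subset _ C) (finite_singleton a)).trans (ncard_singleton a).le

lemma ncard_exposedBy_XSeq_succ_le {A : Matrix (Fin n) (Fin n) ℝ} {p q : Fin n → ℝ}
    (hS : S.Finite) (hAS : A ∈ S) (hA : A.mulVec.Injective)
    (h : exposedBy (XSeq S a (k + 1)) (wedge p q) ⊆ A.mulVec '' XSeq S a k) :
    (exposedBy (XSeq S a (k + 1)) (wedge p q)).ncard ≤
      (exposedBy (XSeq S a k) (wedge (p ᵥ* A) (q ᵥ* A))).ncard := by
  have := ncard_exposedBy_wedge_inter_image_le (finite_XSeq hS a k) hA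
    (fun _ => mulVec_mem_XSeq_succ hAS) p q
  rwa [inter_eq_left.2 h] at this

lemma ncard_exposedBy_XSeq_pair_succ_le_add {A B : Matrix (Fin n) (Fin n) ℝ}
    (hA : A.mulVec.Injective) (hB : B.mulVec.Injective) (a : Fin n → ℝ) (k : ℕ)
    (p q : Fin n → ℝ) :
    (exposedBy (XSeq {A, B} a (k + 1)) (wedge p q)).ncard ≤
      (exposedBy (XSeq {A, B} a k) (wedge (p ᵥ* A) (q ᵥ* A))).ncard +
        (exposedBy (XSeq {A, B} a k) (wedge (p ᵥ* B) (q ᵥ* B))).ncard := by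
  have hfin := finite_XSeq (toFinite {A, B}) a k
  have hA_le := ncard_exposedBy_wedge_inter_image_le hfin hA
    (fun _ => mulVec_mem_XSeq_succ (mem_insert A {B})) p q
  have hB_le := ncard_exposedBy_wedge_inter_image_le hfin hB
    (fun _ => mulVec_mem_XSeq_succ (mem_insert_of_mem A rfl)) p q
  refine le_trans ?_ (add_le_add hA_le hB_le)
  refine le_of_eq_of_le (congrArg ncard ?_) (ncard_union_le _ _)
  rw [← inter_union_distrib_left, ← XSeq_pair_succ, inter_eq_left.2 (exposedBy_subset _ _)]

end XSeq

section SwapShear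

lemma M1_mulVec (x : Fin 2 → ℝ) : M1 *ᵥ x = ![x 1, x 0] := by
  ext i; fin_cases i <;> simp [M1, mulVec, dotProduct]

lemma M2_mulVec (x : Fin 2 → ℝ) : M2 *ᵥ x = ![x 0 + x 1, x 1] := by
  ext i; fin_cases i <;> simp [M2, mulVec, dotProduct]

lemma vecMul_M1 (x y : ℝ) : ![x, y] ᵥ* M1 = ![y, x] := by
  ext i; fin_cases i <;> simp [M1, vecMul, dotProduct]

lemma vecMul_M2 (x y : ℝ) : ![x, y] ᵥ* M2 = ![x, x + y] := by
  ext i; fin_cases i <;> simp [M2, vecMul, dotProduct]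

lemma M1_mulVec_M1_mulVec (x : Fin 2 → ℝ) : M1 *ᵥ M1 *ᵥ x = x := by
  rw [M1_mulVec, M1_mulVec]
  exact FinVec.etaExpand_eq x

lemma M1_mulVec_injective : M1.mulVec.Injective :=
  mulVec_injective_of_det_ne_zero (by simp [M1])

lemma M2_mulVec_injective : M2.mulVec.Injective :=
  mulVec_injective_of_det_ne_zero (by simp [M2])

lemma nonneg_of_mem_M1_M2 :
    ∀ A ∈ ({M1, M2} : Set (Matrix (Fin 2) (Fin 2) ℝ)), ∀ i j, 0 ≤ A i j := by
  simp [M1, M2, Fin.forall_fin_two]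

variable {a : Fin 2 → ℝ} {k : ℕ} {x : Fin 2 → ℝ}

lemma M1_mulVec_mem_XSeq (hx : x ∈ XSeq {M1, M2} a k) : M1 *ᵥ x ∈ XSeq {M1, M2} a (k + 1) :=
  mulVec_mem_XSeq_succ (mem_insert M1 {M2}) hx

lemma M2_mulVec_mem_XSeq (hx : x ∈ XSeq {M1, M2} a k) : M2 *ᵥ x ∈ XSeq {M1, M2} a (k + 1) :=
  mulVec_mem_XSeq_succ (mem_insert_of_mem M1 (mem_singleton M2)) hx

lemma nonneg_of_mem_XSeq_M1_M2 (ha : 0 ≤ a) (hx : x ∈ XSeq {M1, M2} a k) :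
    0 ≤ x 0 ∧ 0 ≤ x 1 :=
  have hx_nonneg := nonneg_of_mem_XSeq nonneg_of_mem_M1_M2 ha hx
  ⟨hx_nonneg 0, hx_nonneg 1⟩

lemma exposedBy_lower_half_first_quadrant_subset (ha : 0 ≤ a) (k : ℕ) :
    exposedBy (XSeq {M1, M2} a (k + 1)) (wedge ![1, 0] ![1, 1]) ⊆
      M2.mulVec '' XSeq {M1, M2} a k := by
  intro x hx
  obtain ⟨y, hy, rfl | rfl⟩ := mem_XSeq_pair_succ.1 hx.1
  · obtain ⟨hy0, hy1⟩ := nonneg_of_mem_XSeq_M1_M2 ha hy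
    refine ⟨y, hy, eq_of_mem_exposedBy_wedge hx (M2_mulVec_mem_XSeq hy) ?_ ?_⟩ <;>
      simp only [M1_mulVec, M2_mulVec, vec2_dotProduct] <;> norm_num <;> linarith
  · exact ⟨y, hy, rfl⟩

lemma ncard_exposedBy_first_quadrant_succ_le (ha : 0 ≤ a) (k : ℕ) :
    (exposedBy (XSeq {M1, M2} a (k + 1)) (wedge ![1, 0] ![0, 1])).ncard ≤
      (exposedBy (XSeq {M1, M2} a k) (wedge ![1, 0] ![0, 1])).ncard + 2 := by
  have hsplit := ncard_exposedBy_wedge_le_add (XSeq {M1, M2} a (k + 1))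
    (show ![1, 0] + ![0, 1] = (![1, 1] : Fin 2 → ℝ) by simp)
  have hlower : (exposedBy (XSeq {M1, M2} a (k + 1)) (wedge ![1, 0] ![1, 1])).ncard ≤
      (exposedBy (XSeq {M1, M2} a k) (wedge ![1, 1] ![1, 2])).ncard := by
    have := ncard_exposedBy_XSeq_succ_le (toFinite _) (mem_insert_of_mem M1 (mem_singleton M2))
      M2_mulVec_injective (exposedBy_lower_half_first_quadrant_subset ha k)
    norm_num only [vecMul_M2] at this
    exact this
  have hupper : (exposedBy (XSeq {M1, M2} a (k + 1)) (wedge ![1, 1] ![0, 1])).ncard ≤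
      (exposedBy (XSeq {M1, M2} a k) (wedge ![1, 0] ![1, 1])).ncard +
        (exposedBy (XSeq {M1, M2} a k) (wedge ![1, 2] ![0, 1])).ncard := by
    have := ncard_exposedBy_XSeq_pair_succ_le_add M1_mulVec_injective M2_mulVec_injective
      a k ![1, 1] ![0, 1]
    norm_num only [vecMul_M1, vecMul_M2] at this
    rwa [wedge_comm ![1, 1] ![1, 0]] at this
  have hfin := finite_XSeq (toFinite {M1, M2}) a k
  have hoverlap_upper := ncard_exposedBy_wedge_add_le hfin
    (show ![1, 1] + ![0, 1] = (![1, 2] : Fin 2 → ℝ) by norm_num)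
  have hoverlap_first := ncard_exposedBy_wedge_add_le hfin
    (show ![1, 0] + ![0, 1] = (![1, 1] : Fin 2 → ℝ) by simp)
  omega

lemma ncard_exposedBy_first_quadrant_le (ha : 0 ≤ a) (k : ℕ) :
    (exposedBy (XSeq {M1, M2} a k) (wedge ![1, 0] ![0, 1])).ncard ≤ 2 * k + 1 := by
  induction k with
  | zero => exact ncard_exposedBy_XSeq_zero_le _ a _
  | succ k ih =>
    have := ncard_exposedBy_first_quadrant_succ_le ha k
    omega

lemma exposedBy_fourth_quadrant_subset (ha : 0 ≤ a) (k : ℕ) :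
    exposedBy (XSeq {M1, M2} a (k + 2)) (wedge ![1, 0] ![0, -1]) ⊆
      M2.mulVec '' XSeq {M1, M2} a (k + 1) := by
  intro x hx
  obtain ⟨y, hy, rfl | rfl⟩ := mem_XSeq_pair_succ.1 hx.1
  · obtain ⟨w, hw, hyw⟩ := mem_XSeq_pair_succ.1 hy
    obtain ⟨hw0, hw1⟩ := nonneg_of_mem_XSeq_M1_M2 ha hw
    have hM2w := M2_mulVec_mem_XSeq hw
    refine ⟨_, hM2w, eq_of_mem_exposedBy_wedge hx (M2_mulVec_mem_XSeq hM2w) ?_ ?_⟩ <;>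
      rcases hyw with rfl | rfl <;> simp only [M1_mulVec, M2_mulVec, vec2_dotProduct] <;>
      norm_num <;> linarith
  · exact ⟨y, hy, rfl⟩

lemma exposedBy_second_quadrant_subset (ha : 0 ≤ a) (k : ℕ) :
    exposedBy (XSeq {M1, M2} a (k + 2)) (wedge ![-1, 0] ![0, 1]) ⊆
      M1.mulVec '' XSeq {M1, M2} a (k + 1) := by
  intro x hx
  obtain ⟨y, hy, rfl | rfl⟩ := mem_XSeq_pair_succ.1 hx.1
  · exact ⟨y, hy, rfl⟩
  · obtain ⟨w, hw, hyw⟩ := mem_XSeq_pair_succ.1 hy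
    obtain ⟨hw0, hw1⟩ := nonneg_of_mem_XSeq_M1_M2 ha hw
    have hM2w := M2_mulVec_mem_XSeq hw
    refine ⟨_, hM2w, eq_of_mem_exposedBy_wedge hx (M1_mulVec_mem_XSeq hM2w) ?_ ?_⟩ <;>
      rcases hyw with rfl | rfl <;> simp only [M1_mulVec, M2_mulVec, vec2_dotProduct] <;>
      norm_num <;> linarith

lemma ncard_exposedBy_fourth_quadrant_add_two_le (ha : 0 ≤ a) (k : ℕ) :
    (exposedBy (XSeq {M1, M2} a (k + 2)) (wedge ![1, 0] ![0, -1])).ncard ≤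
      (exposedBy (XSeq {M1, M2} a (k + 1)) (wedge ![1, 0] ![0, 1])).ncard +
        (exposedBy (XSeq {M1, M2} a (k + 1)) (wedge ![1, 0] ![0, -1])).ncard := by
  have hstep : (exposedBy (XSeq {M1, M2} a (k + 2)) (wedge ![1, 0] ![0, -1])).ncard ≤
      (exposedBy (XSeq {M1, M2} a (k + 1)) (wedge ![1, 1] ![0, -1])).ncard := by
    have := ncard_exposedBy_XSeq_succ_le (toFinite _) (mem_insert_of_mem M1 (mem_singleton M2))
      M2_mulVec_injective (exposedBy_fourth_quadrant_subset ha k)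
    norm_num only [vecMul_M2] at this
    exact this
  have hsplit := ncard_exposedBy_wedge_le_add (XSeq {M1, M2} a (k + 1))
    (show ![1, 1] + ![0, -1] = (![1, 0] : Fin 2 → ℝ) by simp)
  have hsub := union_subset_iff.1
    (wedge_eq_union_of_add_eq (show ![1, 0] + ![0, 1] = (![1, 1] : Fin 2 → ℝ) by simp)).ge
  have hfin := finite_XSeq (toFinite {M1, M2}) a (k + 1)
  have hlower := ncard_le_ncard (exposedBy_mono (XSeq {M1, M2} a (k + 1)) hsub.1)
    (hfin.subset (exposedBy_subset _ _))
  rw [wedge_comm ![1, 1] ![1, 0]] at hsplit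
  omega

lemma ncard_exposedBy_fourth_quadrant_succ_le (ha : 0 ≤ a) (k : ℕ) :
    (exposedBy (XSeq {M1, M2} a (k + 1)) (wedge ![1, 0] ![0, -1])).ncard ≤ (k + 1) ^ 2 + 1 := by
  induction k with
  | zero =>
    have := ncard_exposedBy_XSeq_pair_succ_le_add M1_mulVec_injective M2_mulVec_injective
      a 0 ![1, 0] ![0, -1]
    have h (C : Set (Fin 2 → ℝ)) := ncard_exposedBy_XSeq_zero_le {M1, M2} a C
    exact this.trans (add_le_add (h _) (h _))
  | succ k ih =>
    have hstep := ncard_exposedBy_fourth_quadrant_add_two_le ha k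
    have hfirst := ncard_exposedBy_first_quadrant_le ha (k + 1)
    linarith

lemma ncard_exposedBy_second_quadrant_add_two_le (ha : 0 ≤ a) (k : ℕ) :
    (exposedBy (XSeq {M1, M2} a (k + 2)) (wedge ![-1, 0] ![0, 1])).ncard ≤ (k + 1) ^ 2 + 1 := by
  have h := ncard_exposedBy_XSeq_succ_le (toFinite _) (mem_insert M1 {M2})
    M1_mulVec_injective (exposedBy_second_quadrant_subset ha k)
  rw [vecMul_M1, vecMul_M1, wedge_comm ![0, -1]] at h
  exact h.trans (ncard_exposedBy_fourth_quadrant_succ_le ha k)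

/-- The three points that bound the `k`-th orbit from below, in the coordinatewise order, when
`b = M1 ^ k *ᵥ a`; the parity of `k` decides whether `b` is `a` or its mirror image. -/
def lowerPoints (b : Fin 2 → ℝ) : Set (Fin 2 → ℝ) :=
  {b, M1 *ᵥ M2 *ᵥ b, M2 *ᵥ M1 *ᵥ b}

lemma ncard_lowerPoints_le (b : Fin 2 → ℝ) : (lowerPoints b).ncard ≤ 3 :=
  (ncard_insert_le _ _).trans <| Nat.succ_le_succ <|
    (ncard_insert_le _ _).trans (Nat.succ_le_succ (ncard_singleton _).le)

lemma M1_mulVec_mem_lowerPoints {b f : Fin 2 → ℝ} (hf : f ∈ lowerPoints b) :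
    M1 *ᵥ f ∈ lowerPoints (M1 *ᵥ b) := by
  rcases hf with rfl | rfl | rfl
  · exact Or.inl rfl
  · refine Or.inr (Or.inr ?_)
    rw [M1_mulVec_M1_mulVec, M1_mulVec_M1_mulVec]
    rfl
  · exact Or.inr (Or.inl rfl)

lemma exists_lowerPoints_le_M2_mulVec {b f : Fin 2 → ℝ} (hb : 0 ≤ b) (hf : f ∈ lowerPoints b) :
    ∃ g ∈ lowerPoints (M1 *ᵥ b), g ≤ M2 *ᵥ f := by
  have hb0 : 0 ≤ b 0 := hb 0
  have hb1 : 0 ≤ b 1 := hb 1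
  rcases hf with rfl | rfl | rfl
  · exact ⟨_, Or.inr (Or.inr rfl), by rw [M1_mulVec_M1_mulVec]⟩
  · refine ⟨_, Or.inr (Or.inr rfl), ?_⟩
    simp only [M1_mulVec, M2_mulVec, Pi.le_def, Fin.forall_fin_two]
    norm_num
    grind
  · refine ⟨_, Or.inl rfl, ?_⟩
    simp only [M1_mulVec, M2_mulVec, Pi.le_def, Fin.forall_fin_two]
    norm_num
    grind

lemma exists_lowerPoints_le_of_mem_XSeq (ha : 0 ≤ a) :
    ∀ {k : ℕ} {x : Fin 2 → ℝ}, x ∈ XSeq {M1, M2} a k → ∃ f ∈ lowerPoints (M1 ^ k *ᵥ a), f ≤ x := by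
  intro k
  induction k with
  | zero =>
    rintro x rfl
    exact ⟨x, Or.inl (by rw [pow_zero, one_mulVec]), le_rfl⟩
  | succ k ih =>
    intro x hx
    rw [pow_succ', ← mulVec_mulVec]
    obtain ⟨y, hy, hxy⟩ := mem_XSeq_pair_succ.1 hx
    obtain ⟨f, hf, hfy⟩ := ih hy
    rcases hxy with rfl | rfl
    · exact ⟨M1 *ᵥ f, M1_mulVec_mem_lowerPoints hf,
        monotone_mulVec (nonneg_of_mem_M1_M2 M1 (mem_insert _ _)) hfy⟩
    · have hb : 0 ≤ M1 ^ k *ᵥ a :=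
        nonneg_of_mem_XSeq nonneg_of_mem_M1_M2 ha (pow_mulVec_mem_XSeq (mem_insert M1 {M2}) a k)
      obtain ⟨g, hg, hgf⟩ := exists_lowerPoints_le_M2_mulVec hb hf
      exact ⟨g, hg, hgf.trans <|
        monotone_mulVec (nonneg_of_mem_M1_M2 M2 (mem_insert_of_mem _ rfl)) hfy⟩

lemma lowerPoints_subset_XSeq (a : Fin 2 → ℝ) (k : ℕ) :
    lowerPoints (M1 ^ (k + 2) *ᵥ a) ⊆ XSeq {M1, M2} a (k + 2) := by
  have hb := pow_mulVec_mem_XSeq (mem_insert M1 {M2}) a k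
  have hpow : M1 ^ (k + 2) *ᵥ a = M1 ^ k *ᵥ a := by
    rw [pow_succ', pow_succ', ← mulVec_mulVec, ← mulVec_mulVec, M1_mulVec_M1_mulVec]
  rintro x (rfl | rfl | rfl)
  · exact pow_mulVec_mem_XSeq (mem_insert M1 {M2}) a (k + 2)
  · rw [hpow]
    exact M1_mulVec_mem_XSeq (M2_mulVec_mem_XSeq hb)
  · rw [hpow]
    exact M2_mulVec_mem_XSeq (M1_mulVec_mem_XSeq hb)

lemma exposedBy_third_quadrant_subset (ha : 0 ≤ a) (k : ℕ) :
    exposedBy (XSeq {M1, M2} a (k + 2)) (wedge ![-1, 0] ![0, -1]) ⊆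
      lowerPoints (M1 ^ (k + 2) *ᵥ a) := by
  intro x hx
  obtain ⟨f, hf, hfx⟩ := exists_lowerPoints_le_of_mem_XSeq ha hx.1
  have hf_eq : f = x := by
    apply eq_of_mem_exposedBy_wedge hx (lowerPoints_subset_XSeq a k hf) <;>
      simp only [vec2_dotProduct]
    · simpa using hfx 0
    · simpa using hfx 1
  exact hf_eq ▸ hf

lemma ncard_exposedBy_third_quadrant_add_two_le (ha : 0 ≤ a) (k : ℕ) :
    (exposedBy (XSeq {M1, M2} a (k + 2)) (wedge ![-1, 0] ![0, -1])).ncard ≤ 3 :=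
  (ncard_le_ncard (exposedBy_third_quadrant_subset ha k) (toFinite {_, _, _})).trans
    (ncard_lowerPoints_le _)

lemma univ_subset_union_quadrants :
    (univ : Set (Fin 2 → ℝ)) ⊆ wedge ![1, 0] ![0, 1] ∪ wedge ![1, 0] ![0, -1] ∪
      wedge ![-1, 0] ![0, 1] ∪ wedge ![-1, 0] ![0, -1] := by
  intro c _
  have hmem {s t : ℝ} (hs : 0 ≤ s * c 0) (ht : 0 ≤ t * c 1) (hs1 : s * s = 1) (ht1 : t * t = 1) :
      c ∈ wedge ![s, 0] ![0, t] :=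
    mem_wedge.2 ⟨s * c 0, t * c 1, hs, ht, by ext i; fin_cases i <;> simp <;> grind⟩
  rcases le_total 0 (c 0) with h0 | h0 <;> rcases le_total 0 (c 1) with h1 | h1
  · exact Or.inl (Or.inl (Or.inl (hmem (by simpa) (by simpa) (by simp) (by simp))))
  · exact Or.inl (Or.inl (Or.inr (hmem (by simpa) (by simpa) (by simp) (by simp))))
  · exact Or.inl (Or.inr (hmem (by simpa) (by simpa) (by simp) (by simp)))
  · exact Or.inr (hmem (by simpa) (by simpa) (by simp) (by simp))

lemma ncard_exposedBy_univ_le_add_quadrants {X : Set (Fin 2 → ℝ)} (hX : X.Finite) :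
    (exposedBy X univ).ncard ≤
      (exposedBy X (wedge ![1, 0] ![0, 1])).ncard + (exposedBy X (wedge ![1, 0] ![0, -1])).ncard +
        (exposedBy X (wedge ![-1, 0] ![0, 1])).ncard +
          (exposedBy X (wedge ![-1, 0] ![0, -1])).ncard := by
  refine (ncard_le_ncard (exposedBy_mono X univ_subset_union_quadrants)
    (hX.subset (exposedBy_subset X _))).trans ?_
  simp only [exposedBy_union]
  refine (ncard_union_le _ _).trans ?_
  gcongr
  refine (ncard_union_le _ _).trans ?_
  gcongr
  exact ncard_union_le _ _

lemma NExt_M1_M2_add_two_le_of_nonneg (ha : 0 ≤ a) (k : ℕ) :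
    NExt {M1, M2} a (k + 2) ≤ 2 * (k + 2) ^ 2 + 7 := by
  have hexposed := NExt_le_ncard_exposedBy_univ (toFinite {M1, M2}) a (k + 2)
  have hquadrants :=
    ncard_exposedBy_univ_le_add_quadrants (finite_XSeq (toFinite {M1, M2}) a (k + 2))
  have hfirst := ncard_exposedBy_first_quadrant_le ha (k + 2)
  have hfourth : _ ≤ (k + 2) ^ 2 + 1 := ncard_exposedBy_fourth_quadrant_succ_le ha (k + 1)
  have hsecond := ncard_exposedBy_second_quadrant_add_two_le ha k
  have hthird := ncard_exposedBy_third_quadrant_add_two_le ha k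
  linarith

end SwapShear

theorem stmt8_general {a : Fin 2 → ℝ} (ha : 0 ≤ a ∨ a ≤ 0) {k : ℕ} (hk : 2 ≤ k) :
    (NExt {M1, M2} a k : ℝ) ≤ 4 * (k : ℝ) ^ 2 := by
  have hbound : NExt {M1, M2} a k ≤ 2 * k ^ 2 + 7 := by
    obtain ⟨m, rfl⟩ := Nat.exists_eq_add_of_le' hk
    rcases ha with ha | ha
    · exact NExt_M1_M2_add_two_le_of_nonneg ha m
    · rw [← NExt_neg]
      exact NExt_M1_M2_add_two_le_of_nonneg (neg_nonneg.2 ha) m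
  have hN : NExt {M1, M2} a k ≤ 4 * k ^ 2 := by nlinarith
  exact_mod_cast hN

/-- `N_k(Σ₁, a) = O(k²)` for `a` on the boundary of the first or third quadrant. -/
theorem stmt8 : ∃ α : ℝ, 0 < α ∧ ∃ k₀ : ℕ, ∀ a : Fin 2 → ℝ,
    ((0 ≤ a 0 ∧ 0 ≤ a 1 ∧ a 0 * a 1 = 0) ∨ (a 0 ≤ 0 ∧ a 1 ≤ 0 ∧ a 0 * a 1 = 0)) →
    ∀ k : ℕ, k₀ ≤ k → (NExt {M1, M2} a k : ℝ) ≤ α * (k : ℝ) ^ 2 := by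
  refine ⟨4, by norm_num, 2, fun a ha k hk => stmt8_general (ha.imp ?_ ?_) hk⟩ <;>
    exact fun h => Pi.le_def.2 (Fin.forall_fin_two.2 ⟨h.1, h.2.1⟩)

end
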